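/- Let G be a finite simple connected graph. A vertex v ∈ V(G) belongs to every monitoring edge-geodetic set of G if and only if there exists a neighbor u of v such that for every neighbor x of v, every induced 2-path u–v–x (i.e., u, x ∈ N(v) with u ≠ x and u not adjacent to x) is contained in a 4-cycle of G. -/

import Mathlib

/-!
If `a, b` monitor an edge at `v`, then no other vertex of a shortest `a`–`b` path is as far from `a`
as `v` is. Suppose `a, b ≠ v` monitor `vu`, with `v` nearer to `a` than `u` is, and let `x` be the
vertex before `v` on a shortest `a`–`v` path. Every common neighbour of `u` and `x` could replace
`v` on a shortest `a`–`b` path, so `v` is the only one: `u–v–x` is an induced 2-path in no 4-cycle.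
Conversely, such a 2-path is the only shortest `u`–`x` path, so `u, x` monitor `vu`. Hence the
complement of `v`, the largest set that misses `v`, is a MEG-set exactly when every neighbour `u` of
`v` starts such a 2-path.
-/

open SimpleGraph

variable {V : Type*}

/-- A walk is a shortest path if its length equals the distance between its endpoints. -/
def IsShortest (G : SimpleGraph V) {u v : V} (p : G.Walk u v) : Prop :=
  p.length = G.dist u v

/-- `S` is a geodetic set: every vertex lies on some shortest path between
two distinct vertices of `S`. -/
def IsGeodeticSet (G : SimpleGraph V) (S : Set V) : Prop :=
  ∀ x : V, ∃ u ∈ S, ∃ v ∈ S, u ≠ v ∧ ∃ p : G.Walk u v, IsShortest G p ∧ x ∈ p.support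

/-- `S` is an edge-geodetic set: every edge lies on some shortest path between
two distinct vertices of `S`. -/
def IsEdgeGeodeticSet (G : SimpleGraph V) (S : Set V) : Prop :=
  ∀ e ∈ G.edgeSet, ∃ u ∈ S, ∃ v ∈ S, u ≠ v ∧ ∃ p : G.Walk u v, IsShortest G p ∧ e ∈ p.edges

/-- `S` is a strong edge-geodetic set: one can choose a single shortest path for each
pair of distinct vertices of `S` so that the chosen paths cover every edge. -/
def IsStrongEdgeGeodeticSet (G : SimpleGraph V) (S : Set V) : Prop :=
  ∃ f : ∀ u v : V, u ∈ S → v ∈ S → u ≠ v → G.Walk u v,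
    (∀ u v hu hv huv, IsShortest G (f u v hu hv huv)) ∧
    ∀ e ∈ G.edgeSet, ∃ u v, ∃ hu : u ∈ S, ∃ hv : v ∈ S, ∃ huv : u ≠ v,
      e ∈ (f u v hu hv huv).edges

/-- The pair `u, v` monitors the edge `e`: `u ≠ v` and `e` lies on every shortest
`u`–`v` path. -/
def Monitors (G : SimpleGraph V) (u v : V) (e : Sym2 V) : Prop :=
  u ≠ v ∧ ∀ p : G.Walk u v, IsShortest G p → e ∈ p.edges

/-- `S` is a monitoring edge-geodetic set: every edge is monitored by some pair of
distinct vertices of `S`. -/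
def IsMEGSet (G : SimpleGraph V) (S : Set V) : Prop :=
  ∀ e ∈ G.edgeSet, ∃ u ∈ S, ∃ v ∈ S, Monitors G u v e

/-- The geodetic number `g(G)`. -/
noncomputable def geodeticNumber (G : SimpleGraph V) : ℕ :=
  sInf {n : ℕ | ∃ S : Set V, IsGeodeticSet G S ∧ S.ncard = n}

/-- The edge-geodetic number `eg(G)`. -/
noncomputable def edgeGeodeticNumber (G : SimpleGraph V) : ℕ :=
  sInf {n : ℕ | ∃ S : Set V, IsEdgeGeodeticSet G S ∧ S.ncard = n}

/-- The strong edge-geodetic number `seg(G)`. -/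
noncomputable def strongEdgeGeodeticNumber (G : SimpleGraph V) : ℕ :=
  sInf {n : ℕ | ∃ S : Set V, IsStrongEdgeGeodeticSet G S ∧ S.ncard = n}

/-- The monitoring edge-geodetic number `meg(G)`. -/
noncomputable def monitoringEdgeGeodeticNumber (G : SimpleGraph V) : ℕ :=
  sInf {n : ℕ | ∃ S : Set V, IsMEGSet G S ∧ S.ncard = n}

section Shortest

variable {G : SimpleGraph V} {a b v w : V}

theorem IsShortest.reverse {p : G.Walk a b} (hp : IsShortest G p) : IsShortest G p.reverse := by
  rw [IsShortest, Walk.length_reverse, dist_comm]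
  exact hp

theorem IsShortest.of_append_left {q : G.Walk a v} {r : G.Walk v b}
    (h : IsShortest G (q.append r)) : IsShortest G q :=
  length_eq_dist_of_subwalk h (Walk.isSubwalk_of_append_left rfl)

theorem IsShortest.of_append_right {q : G.Walk a v} {r : G.Walk v b}
    (h : IsShortest G (q.append r)) : IsShortest G r :=
  length_eq_dist_of_subwalk h (Walk.isSubwalk_of_append_right rfl)

theorem IsShortest.dist_add_dist {p : G.Walk a b} (hp : IsShortest G p) (hv : v ∈ p.support) :
    G.dist a v + G.dist v b = G.dist a b := by
  obtain ⟨q, r, rfl⟩ := Walk.mem_support_iff_exists_append.mp hv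
  rw [← hp, ← hp.of_append_left, ← hp.of_append_right, Walk.length_append]

theorem IsShortest.getVert_dist {p : G.Walk a b} (hp : IsShortest G p) (hv : v ∈ p.support) :
    p.getVert (G.dist a v) = v := by
  obtain ⟨q, r, rfl⟩ := Walk.mem_support_iff_exists_append.mp hv
  rw [← hp.of_append_left]
  simp [Walk.getVert_append]

theorem IsShortest.eq_of_dist_eq {p : G.Walk a b} (hp : IsShortest G p) (hv : v ∈ p.support)
    (hw : w ∈ p.support) (h : G.dist a v = G.dist a w) : v = w := by
  rw [← hp.getVert_dist hv, h, hp.getVert_dist hw]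

theorem exists_isShortest_mem_support (hav : G.Reachable a v) (hvb : G.Reachable v b)
    (h : G.dist a v + G.dist v b = G.dist a b) :
    ∃ p : G.Walk a b, IsShortest G p ∧ v ∈ p.support := by
  obtain ⟨q, hq⟩ := hav.exists_walk_length_eq_dist
  obtain ⟨r, hr⟩ := hvb.exists_walk_length_eq_dist
  refine ⟨q.append r, ?_, (q.mem_support_append_iff r).mpr (.inl q.end_mem_support)⟩
  rw [IsShortest, Walk.length_append, hq, hr, h]

theorem exists_adj_dist_add_one_eq (hav : G.Reachable a v) (hne : a ≠ v) :
    ∃ x, G.Adj v x ∧ G.dist a x + 1 = G.dist a v := by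
  obtain ⟨p, hp : IsShortest G p⟩ := hav.exists_walk_length_eq_dist
  have hadj : G.Adj p.penultimate v := p.adj_penultimate (Walk.not_nil_of_ne hne)
  refine ⟨p.penultimate, hadj.symm, ?_⟩
  rw [← dist_eq_one_iff_adj.mpr hadj]
  exact hp.dist_add_dist (p.getVert_mem_support _)

end Shortest

section Monitors

variable {G : SimpleGraph V} {a b u v w x : V} {e : Sym2 V}

theorem Monitors.symm (h : Monitors G a b e) : Monitors G b a e := by
  refine ⟨h.1.symm, fun p hp => ?_⟩
  rw [← List.mem_reverse, ← Walk.edges_reverse]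
  exact h.2 p.reverse hp.reverse

theorem Monitors.mem_support (h : Monitors G a b e) (hv : v ∈ e) {p : G.Walk a b}
    (hp : IsShortest G p) : v ∈ p.support :=
  p.mem_support_of_mem_edges (h.2 p hp) hv

theorem Monitors.dist_add_dist (hab : G.Reachable a b) (h : Monitors G a b e) (hv : v ∈ e) :
    G.dist a v + G.dist v b = G.dist a b := by
  obtain ⟨p, hp : IsShortest G p⟩ := hab.exists_walk_length_eq_dist
  exact hp.dist_add_dist (h.mem_support hv hp)

theorem Monitors.eq_of_dist_eq (h : Monitors G a b e) (hv : v ∈ e) (haw : G.Reachable a w)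
    (hwb : G.Reachable w b) (hw : G.dist a w + G.dist w b = G.dist a b)
    (hdist : G.dist a w = G.dist a v) : w = v := by
  obtain ⟨p, hp, hwp⟩ := exists_isShortest_mem_support haw hwb hw
  exact hp.eq_of_dist_eq hwp (h.mem_support hv hp) hdist

theorem monitors_of_adj (h : G.Adj a b) : Monitors G a b s(a, b) := by
  refine ⟨h.ne, fun p hp => ?_⟩
  have hlen : p.length = 1 := hp.trans (dist_eq_one_iff_adj.mpr h)
  match p, hlen with
  | .cons _ .nil, _ => simp

theorem commonNeighbors_eq_singleton_iff :
    G.commonNeighbors u x = {v} ↔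
      G.Adj u v ∧ G.Adj v x ∧ ∀ w, G.Adj u w → G.Adj x w → w = v := by
  simp only [Set.eq_singleton_iff_unique_mem, mem_commonNeighbors, and_imp, and_assoc,
    G.adj_comm x v]

theorem monitors_of_commonNeighbors_eq_singleton (hne : u ≠ x) (hnadj : ¬ G.Adj u x)
    (hv : G.commonNeighbors u x = {v}) : Monitors G u x s(v, u) := by
  refine ⟨hne, fun p hp => ?_⟩
  obtain ⟨huv, hvx, hunique⟩ := commonNeighbors_eq_singleton_iff.mp hv
  have hlen : p.length ≤ 2 := hp.trans_le (dist_le (.cons huv (.cons hvx .nil)))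
  match p with
  | .nil => exact absurd rfl hne
  | .cons hux .nil => exact absurd hux hnadj
  | .cons (v := w) huw (.cons hwx .nil) =>
    obtain rfl : w = v := hunique w huw hwx.symm
    simp [Sym2.eq_swap]
  | .cons _ (.cons _ (.cons _ _)) => simp at hlen

theorem Monitors.dist_lt_or_dist_lt (hab : G.Reachable a b) (hvu : v ≠ u)
    (h : Monitors G a b s(v, u)) : G.dist a v < G.dist a u ∨ G.dist b v < G.dist b u := by
  obtain ⟨p, hp : IsShortest G p⟩ := hab.exists_walk_length_eq_dist
  have hvp : v ∈ p.support := h.mem_support (Sym2.mem_mk_left v u) hp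
  have hup : u ∈ p.support := h.mem_support (Sym2.mem_mk_right v u) hp
  have hne : G.dist a v ≠ G.dist a u := fun heq => hvu (hp.eq_of_dist_eq hvp hup heq)
  have hv := hp.dist_add_dist hvp
  have hu := hp.dist_add_dist hup
  rw [dist_comm (u := b), dist_comm (u := b)]
  omega

theorem Monitors.exists_commonNeighbors_eq_singleton_of_dist_lt (hconn : G.Connected)
    (hvu : G.Adj v u) (h : Monitors G a b s(v, u)) (hav : a ≠ v)
    (hlt : G.dist a v < G.dist a u) :
    ∃ x, u ≠ x ∧ ¬ G.Adj u x ∧ G.commonNeighbors u x = {v} := by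
  obtain ⟨x, hvx, hx⟩ := exists_adj_dist_add_one_eq (hconn a v) hav
  have hau : G.dist a u = G.dist a x + 2 := by
    have := hvu.diff_dist_adj (u := a)
    omega
  have hux : u ≠ x := by
    rintro rfl
    omega
  have hnadj : ¬ G.Adj u x := fun hadj => by
    have := hadj.diff_dist_adj (u := a)
    omega
  refine ⟨x, hux, hnadj, commonNeighbors_eq_singleton_iff.mpr ⟨hvu.symm, hvx, fun w huw hxw => ?_⟩⟩
  have haw : G.dist a w = G.dist a v := by
    have := hxw.diff_dist_adj (u := a)
    have := huw.diff_dist_adj (u := a)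
    omega
  have hawb : G.dist a w + G.dist w b = G.dist a b := by
    have hub := h.dist_add_dist (hconn a b) (Sym2.mem_mk_right v u)
    have hbw := huw.diff_dist_adj (u := b)
    rw [dist_comm (u := b), dist_comm (u := b)] at hbw
    have : G.dist a b ≤ G.dist a w + G.dist w b := hconn.dist_triangle
    omega
  exact h.eq_of_dist_eq (Sym2.mem_mk_left v u) (hconn a w) (hconn w b) hawb haw

theorem exists_monitors_ne_iff_exists_commonNeighbors_eq_singleton (hconn : G.Connected)
    (hvu : G.Adj v u) :
    (∃ a ≠ v, ∃ b ≠ v, Monitors G a b s(v, u)) ↔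
      ∃ x, u ≠ x ∧ ¬ G.Adj u x ∧ G.commonNeighbors u x = {v} := by
  constructor
  · rintro ⟨a, hav, b, hbv, h⟩
    rcases h.dist_lt_or_dist_lt (hconn a b) hvu.ne with hlt | hlt
    · exact h.exists_commonNeighbors_eq_singleton_of_dist_lt hconn hvu hav hlt
    · exact h.symm.exists_commonNeighbors_eq_singleton_of_dist_lt hconn hvu hbv hlt
  · rintro ⟨x, hux, hnadj, hv⟩
    obtain ⟨-, hvx, -⟩ := commonNeighbors_eq_singleton_iff.mp hv
    exact ⟨u, hvu.ne', x, hvx.ne', monitors_of_commonNeighbors_eq_singleton hux hnadj hv⟩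

end Monitors

section MEGSet

variable {G : SimpleGraph V} {v : V}

theorem IsMEGSet.mono {S T : Set V} (hST : S ⊆ T) (hS : IsMEGSet G S) : IsMEGSet G T := by
  intro e he
  obtain ⟨a, ha, b, hb, h⟩ := hS e he
  exact ⟨a, hST ha, b, hST hb, h⟩

theorem forall_isMEGSet_mem_iff :
    (∀ S : Set V, IsMEGSet G S → v ∈ S) ↔ ¬ IsMEGSet G {v}ᶜ := by
  refine ⟨fun h hv => h _ hv rfl, fun h S hS => ?_⟩
  by_contra hvS
  exact h (hS.mono (Set.subset_compl_singleton_iff.mpr hvS))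

theorem isMEGSet_compl_singleton_iff :
    IsMEGSet G {v}ᶜ ↔ ∀ u, G.Adj v u → ∃ a ≠ v, ∃ b ≠ v, Monitors G a b s(v, u) := by
  refine ⟨fun h u hvu => h s(v, u) hvu, fun h e he => ?_⟩
  by_cases hve : v ∈ e
  · obtain ⟨u, rfl⟩ := hve
    exact h u he
  · induction e using Sym2.ind with
    | _ s t =>
      obtain ⟨hvs, hvt⟩ : v ≠ s ∧ v ≠ t := by rwa [Sym2.mem_iff, not_or] at hve
      exact ⟨s, hvs.symm, t, hvt.symm, monitors_of_adj he⟩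

end MEGSet

theorem mem_every_meg_iff_four_cycle_general {G : SimpleGraph V} (hconn : G.Connected) (v : V) :
    (∀ S : Set V, IsMEGSet G S → v ∈ S) ↔
      ∃ u : V, G.Adj v u ∧ ∀ x : V, G.Adj v x → u ≠ x → ¬ G.Adj u x →
        ∃ w : V, w ≠ v ∧ G.Adj u w ∧ G.Adj x w := by
  rw [forall_isMEGSet_mem_iff, isMEGSet_compl_singleton_iff]
  simp only [not_forall, exists_prop]
  refine exists_congr fun u => and_congr_right fun hvu => ?_
  rw [exists_monitors_ne_iff_exists_commonNeighbors_eq_singleton hconn hvu]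
  simp only [commonNeighbors_eq_singleton_iff, hvu.symm, true_and]
  grind

/-- A vertex `v` belongs to every monitoring edge-geodetic set iff there is
a neighbor `u` of `v` such that every induced 2-path `u–v–x` (with `x` a neighbor of `v`,
`u ≠ x`, `u` not adjacent to `x`) is part of a 4-cycle. -/
theorem mem_every_meg_iff_four_cycle {V : Type*} [Fintype V]
    (G : SimpleGraph V) (hconn : G.Connected) (v : V) :
    (∀ S : Set V, IsMEGSet G S → v ∈ S) ↔
      ∃ u : V, G.Adj v u ∧ ∀ x : V, G.Adj v x → u ≠ x → ¬ G.Adj u x →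
        ∃ w : V, w ≠ v ∧ G.Adj u w ∧ G.Adj x w :=
  mem_every_meg_iff_four_cycle_general hconn v
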